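/- arXiv:math/0606015 — 2 statements merged into one kernel-verified Lean document; each statement's English description precedes it below -/
import Mathlib

section
/- Fix Λ > 0 and let b : [0,∞) → ℝ be continuous, nonnegative and integrable. With E(t,s) the fundamental solution of the dissipative system, E₀(t) = [[cos(Λt), sin(Λt)], [−sin(Λt), cos(Λt)]], and Q(t,s) := E₀(s−t)·E(t,s), the limit matrix Q(∞,s) := lim_{t→∞} Q(t,s) exists and is invertible for every s ≥ 0. -/
open MeasureTheory Filter

/-- The coefficient matrix `[[0, Λ], [−Λ, −2b(t)]]` of the dissipative system. -/
noncomputable def sysMat (Λ : ℝ) (b : ℝ → ℝ) (t : ℝ) : Matrix (Fin 2) (Fin 2) ℂ :=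
  !![0, (Λ : ℂ); (-Λ : ℂ), ((-2 * b t : ℝ) : ℂ)]

/-- The fundamental solution `E₀(t)` of the free system. -/
noncomputable def freeMat (Λ t : ℝ) : Matrix (Fin 2) (Fin 2) ℂ :=
  !![(Real.cos (Λ * t) : ℂ), (Real.sin (Λ * t) : ℂ);
     (-(Real.sin (Λ * t)) : ℝ), (Real.cos (Λ * t) : ℂ)]

/-!
In the interaction picture, `Q(t) = E₀(s - t) E(t)` solves `Q' = R Q`, where `R(t)` is the
dissipative part of the coefficient matrix conjugated by the unitary matrix `E₀(s - t)`; hence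
`‖R(t)‖ = 2 |b(t)|` is integrable. In any Banach algebra such a solution converges, and starting
from a unit its limit is a unit: over an interval on which `∫ ‖R‖ ≤ 1/4`, the factor `Q(t) Q(a)⁻¹`
stays within `1/2` of `1`. Bounded intervals are exhausted by such steps, and a last step reaches
`∞` because the tails of `∫ ‖R‖` are small.
-/

open Set Topology

section SmallIntegrals

variable {g : ℝ → ℝ} {s c ε : ℝ}

lemma exists_forall_ge_intervalIntegral_le (hg : IntegrableOn g (Ici s)) (hg0 : ∀ t, 0 ≤ g t)
    (hε : 0 < ε) : ∃ T ≥ s, ∀ t ≥ T, ∫ x in T..t, g x ≤ ε := by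
  have htail : ∀ᶠ T in atTop, ∫ x in Ioi T, g x < ε :=
    (tendsto_integral_Ioi_zero tendsto_id).eventually_lt_const hε
  obtain ⟨T, hT, hsT⟩ := (htail.and (eventually_ge_atTop s)).exists
  refine ⟨T, hsT, fun t ht ↦ ?_⟩
  calc ∫ x in T..t, g x = ∫ x in Ioc T t, g x := intervalIntegral.integral_of_le ht
    _ ≤ ∫ x in Ioi T, g x :=
      setIntegral_mono_set (hg.mono_set (Ioi_subset_Ici hsT))
        (Eventually.of_forall hg0) Ioc_subset_Ioi_self.eventuallyLE
    _ ≤ ε := hT.le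

lemma exists_mem_Ico_intervalIntegral_le (hsc : s < c) (hg : IntegrableOn g (Icc s c))
    (hε : 0 < ε) : ∃ a ∈ Ico s c, ∫ x in a..c, g x ≤ ε := by
  have hcont : ContinuousOn (fun a ↦ ∫ x in a..c, g x) (Icc s c) := by
    rw [← uIcc_of_le hsc.le] at hg ⊢
    exact intervalIntegral.continuousOn_primitive_interval_left hg
  have hlim : Tendsto (fun a ↦ ∫ x in a..c, g x) (𝓝[<] c) (𝓝 0) := by
    have h := hcont c (right_mem_Icc.2 hsc.le)
    rw [ContinuousWithinAt, intervalIntegral.integral_same] at h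
    rw [← nhdsWithin_Ico_eq_nhdsLT hsc]
    exact h.mono_left (nhdsWithin_mono c Ico_subset_Icc_self)
  obtain ⟨a, ha, hac⟩ :=
    ((hlim.eventually_le_const hε).and (Ico_mem_nhdsLT hsc)).exists
  exact ⟨a, hac, ha⟩

end SmallIntegrals

section LinearGrowth

variable {F : Type*} [NormedAddCommGroup F] [NormedSpace ℝ F]
  {f f' : ℝ → F} {r : ℝ → ℝ} {a b : ℝ}

lemma norm_sub_le_integral_mul {M : ℝ} (hab : a ≤ b)
    (hf : ∀ t ∈ Icc a b, HasDerivAt f (f' t) t) (hr : IntegrableOn r (Icc a b))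
    (hr0 : ∀ t, 0 ≤ r t) (hf' : ∀ t ∈ Icc a b, ‖f' t‖ ≤ r t * ‖f t‖)
    (hM : ∀ t ∈ Icc a b, ‖f t‖ ≤ M) :
    ‖f b - f a‖ ≤ (∫ t in a..b, r t) * M := by
  rw [← intervalIntegral.integral_mul_const]
  refine norm_sub_le_integral_of_norm_deriv_le_of_le hab (HasDerivAt.continuousOn hf)
    (fun t ht ↦ (hf t (Ioo_subset_Icc_self ht)).differentiableAt.differentiableWithinAt)
    (Eventually.of_forall fun t ht ↦ ?_)
    ((intervalIntegrable_iff_integrableOn_Icc_of_le hab).2 (hr.mul_const M))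
  have ht' := Ioo_subset_Icc_self ht
  rw [(hf t ht').deriv]
  exact (hf' t ht').trans (mul_le_mul_of_nonneg_left (hM t ht') (hr0 t))

lemma norm_le_two_mul_norm_of_integral_le_half
    (hf : ∀ t ∈ Icc a b, HasDerivAt f (f' t) t) (hr : IntegrableOn r (Icc a b))
    (hr0 : ∀ t, 0 ≤ r t) (hf' : ∀ t ∈ Icc a b, ‖f' t‖ ≤ r t * ‖f t‖)
    (hsmall : ∫ t in a..b, r t ≤ 1 / 2) :
    ∀ t ∈ Icc a b, ‖f t‖ ≤ 2 * ‖f a‖ := by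
  intro t ht
  obtain ⟨m, hm, hmax⟩ := isCompact_Icc.exists_isMaxOn ⟨t, ht⟩ (HasDerivAt.continuousOn hf).norm
  have hsub : Icc a m ⊆ Icc a b := Icc_subset_Icc_right hm.2
  have hincr : ‖f m - f a‖ ≤ (∫ x in a..m, r x) * ‖f m‖ :=
    norm_sub_le_integral_mul hm.1 (fun x hx ↦ hf x (hsub hx)) (hr.mono_set hsub) hr0
      (fun x hx ↦ hf' x (hsub hx)) fun x hx ↦ hmax (hsub hx)
  have hmono : ∫ x in a..m, r x ≤ ∫ x in a..b, r x :=
    intervalIntegral.integral_mono_interval le_rfl hm.1 hm.2 (Eventually.of_forall hr0)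
      ((intervalIntegrable_iff_integrableOn_Icc_of_le (hm.1.trans hm.2)).2 hr)
  have hhalf : ‖f m‖ ≤ ‖f a‖ + 1 / 2 * ‖f m‖ :=
    calc ‖f m‖ ≤ ‖f a‖ + ‖f m - f a‖ := norm_le_norm_add_norm_sub' _ _
      _ ≤ ‖f a‖ + 1 / 2 * ‖f m‖ := by grw [hincr, hmono, hsmall]
  have htm : ‖f t‖ ≤ ‖f m‖ := hmax ht
  linarith

lemma norm_sub_le_half_norm_of_integral_le_quarter (hab : a ≤ b)
    (hf : ∀ t ∈ Icc a b, HasDerivAt f (f' t) t) (hr : IntegrableOn r (Icc a b))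
    (hr0 : ∀ t, 0 ≤ r t) (hf' : ∀ t ∈ Icc a b, ‖f' t‖ ≤ r t * ‖f t‖)
    (hsmall : ∫ t in a..b, r t ≤ 1 / 4) :
    ‖f b - f a‖ ≤ 1 / 2 * ‖f a‖ :=
  calc ‖f b - f a‖ ≤ (∫ t in a..b, r t) * (2 * ‖f a‖) :=
        norm_sub_le_integral_mul hab hf hr hr0 hf'
          (norm_le_two_mul_norm_of_integral_le_half hf hr hr0 hf' (by linarith))
    _ ≤ 1 / 4 * (2 * ‖f a‖) := by grw [hsmall]
    _ = 1 / 2 * ‖f a‖ := by ring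

end LinearGrowth

section LinearODE

lemma isUnit_of_norm_mul_inv_sub_one_le_half {A : Type*} [NormedRing A] [CompleteSpace A]
    {x : A} {u : Aˣ} (h : ‖x * ↑u⁻¹ - 1‖ ≤ 1 / 2) : IsUnit x := by
  have hx : IsUnit (x * ↑u⁻¹) := by
    rw [norm_sub_rev] at h
    simpa using isUnit_one_sub_of_norm_lt_one (h.trans_lt one_half_lt_one)
  exact (Units.isUnit_mul_units x u⁻¹).1 hx

variable {A : Type*} [NormedRing A] [NormedAlgebra ℝ A] {Q R : ℝ → A} {s a b : ℝ}

lemma norm_mul_inv_sub_one_le_half [NormOneClass A] {u : Aˣ} (hab : a ≤ b)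
    (hQ : ∀ t ∈ Icc a b, HasDerivAt Q (R t * Q t) t) (hR : IntegrableOn R (Icc a b))
    (hsmall : ∫ t in a..b, ‖R t‖ ≤ 1 / 4) (hu : Q a = u) :
    ‖Q b * ↑u⁻¹ - 1‖ ≤ 1 / 2 := by
  have hP : ∀ t ∈ Icc a b, HasDerivAt (fun τ ↦ Q τ * ↑u⁻¹) (R t * (Q t * ↑u⁻¹)) t := by
    intro t ht
    simpa only [mul_assoc] using (hQ t ht).mul_const (↑u⁻¹ : A)
  simpa [hu] using norm_sub_le_half_norm_of_integral_le_quarter hab hP hR.norm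
    (fun t ↦ norm_nonneg (R t)) (fun t _ ↦ norm_mul_le _ _) hsmall

variable [CompleteSpace A]

lemma isUnit_of_hasDerivAt_mul [NormOneClass A] (hab : a ≤ b)
    (hQ : ∀ t ∈ Icc a b, HasDerivAt Q (R t * Q t) t) (hR : IntegrableOn R (Icc a b))
    (ha : IsUnit (Q a)) : IsUnit (Q b) := by
  by_contra hb
  have hcompact : IsCompact (Icc a b ∩ Q ⁻¹' nonunits A) :=
    isCompact_Icc.of_isClosed_subset
      ((HasDerivAt.continuousOn hQ).preimage_isClosed_of_isClosed isClosed_Icc nonunits.isClosed)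
      inter_subset_left
  obtain ⟨c, ⟨hc, hQc⟩, hleast⟩ := hcompact.exists_isLeast ⟨b, right_mem_Icc.2 hab, hb⟩
  have hac : a < c := hc.1.lt_of_ne fun h ↦ hQc (h ▸ ha)
  have hsub : Icc a c ⊆ Icc a b := Icc_subset_Icc_right hc.2
  obtain ⟨d, hd, hsmall⟩ :=
    exists_mem_Ico_intervalIntegral_le hac (hR.mono_set hsub).norm (ε := 1 / 4) (by norm_num)
  obtain ⟨u, hu⟩ : IsUnit (Q d) := by
    by_contra hQd
    exact hd.2.not_ge (hleast ⟨hsub (Ico_subset_Icc_self hd), hQd⟩)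
  have hsub' : Icc d c ⊆ Icc a b := Icc_subset_Icc hd.1 hc.2
  exact hQc (isUnit_of_norm_mul_inv_sub_one_le_half (norm_mul_inv_sub_one_le_half hd.2.le
    (fun t ht ↦ hQ t (hsub' ht)) (hR.mono_set hsub') hsmall hu.symm))

lemma exists_tendsto_of_hasDerivAt_mul (hQ : ∀ t ≥ s, HasDerivAt Q (R t * Q t) t)
    (hR : IntegrableOn R (Ici s)) : ∃ Qinf, Tendsto Q atTop (𝓝 Qinf) := by
  obtain ⟨T, hsT, hsmall⟩ :=
    exists_forall_ge_intervalIntegral_le hR.norm (fun t ↦ norm_nonneg (R t)) (ε := 1 / 2)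
      (by norm_num)
  have hbound : ∀ t ≥ T, ‖Q t‖ ≤ 2 * ‖Q T‖ := fun t ht ↦
    norm_le_two_mul_norm_of_integral_le_half (fun x hx ↦ hQ x (hsT.trans hx.1))
      (hR.mono_set fun x hx ↦ hsT.trans hx.1).norm (fun x ↦ norm_nonneg (R x))
      (fun x _ ↦ norm_mul_le _ _) (hsmall t ht) t (right_mem_Icc.2 ht)
  have hTs : Ioi T ⊆ Ici s := Ioi_subset_Ici hsT
  have hcont : ContinuousOn Q (Ioi T) := HasDerivAt.continuousOn fun t ht ↦ hQ t (hTs ht)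
  have hint : IntegrableOn (R • Q) (Ioi T) :=
    Integrable.smul_bdd (hR.mono_set hTs) (2 * ‖Q T‖)
      (hcont.aestronglyMeasurable measurableSet_Ioi)
      (ae_restrict_of_forall_mem measurableSet_Ioi fun t ht ↦ hbound t (le_of_lt ht))
  exact ⟨_, tendsto_limUnder_of_hasDerivAt_of_integrableOn_Ioi (fun t ht ↦ hQ t (hTs ht)) hint⟩

lemma isUnit_of_tendsto_of_hasDerivAt_mul [NormOneClass A] {Qinf : A}
    (hQ : ∀ t ≥ s, HasDerivAt Q (R t * Q t) t) (hR : IntegrableOn R (Ici s))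
    (hs : IsUnit (Q s)) (hlim : Tendsto Q atTop (𝓝 Qinf)) : IsUnit Qinf := by
  obtain ⟨T, hsT, hsmall⟩ :=
    exists_forall_ge_intervalIntegral_le hR.norm (fun t ↦ norm_nonneg (R t)) (ε := 1 / 4)
      (by norm_num)
  obtain ⟨u, hu⟩ : IsUnit (Q T) :=
    isUnit_of_hasDerivAt_mul hsT (fun t ht ↦ hQ t ht.1) (hR.mono_set Icc_subset_Ici_self) hs
  have hclose : ∀ t ≥ T, ‖Q t * ↑u⁻¹ - 1‖ ≤ 1 / 2 := fun t ht ↦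
    norm_mul_inv_sub_one_le_half ht (fun x hx ↦ hQ x (hsT.trans hx.1))
      (hR.mono_set fun x hx ↦ hsT.trans hx.1) (hsmall t ht) hu.symm
  exact isUnit_of_norm_mul_inv_sub_one_le_half <|
    le_of_tendsto ((hlim.mul_const _).sub_const 1).norm
      ((eventually_ge_atTop T).mono hclose)

end LinearODE

section InteractionPicture

lemma hasDerivAt_of_forall_entry {𝕜 F m n : Type*} [NontriviallyNormedField 𝕜]
    [NormedAddCommGroup F] [NormedSpace 𝕜 F] [Finite m] [Finite n]
    {M : 𝕜 → Matrix m n F} {M' : Matrix m n F} {t : 𝕜}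
    (h : ∀ i j, HasDerivAt (fun τ ↦ M τ i j) (M' i j) t) : HasDerivAt M M' t := by
  cases nonempty_fintype m
  cases nonempty_fintype n
  exact hasDerivAt_pi.2 fun i ↦ hasDerivAt_pi.2 (h i)

open scoped Matrix.Norms.L2Operator

/-- The matrix `diag(0, -2)` through which the dissipation `b` enters the coefficient matrix. -/
noncomputable def dissipationMat : Matrix (Fin 2) (Fin 2) ℂ :=
  Matrix.diagonal ![0, -2]

/-- The coefficient matrix `R(t) = b(t) E₀(s - t) diag(0, -2) E₀(s - t)⋆` of the equation
`Q' = R Q` satisfied by `Q(t) = E₀(s - t) E(t)`. The adjoint stands for the inverse of the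
unitary matrix `E₀(s - t)`. -/
noncomputable def interactionMat (Λ : ℝ) (b : ℝ → ℝ) (s t : ℝ) : Matrix (Fin 2) (Fin 2) ℂ :=
  b t • (freeMat Λ (s - t) * dissipationMat * star (freeMat Λ (s - t)))

variable {Λ s t : ℝ} {b : ℝ → ℝ}

lemma sysMat_eq_add_smul_dissipationMat (Λ : ℝ) (b : ℝ → ℝ) (t : ℝ) :
    sysMat Λ b t = sysMat Λ 0 t + b t • dissipationMat := by
  ext i j
  fin_cases i <;> fin_cases j <;> simp [sysMat, dissipationMat, mul_comm]

lemma freeMat_mem_unitary (Λ t : ℝ) : freeMat Λ t ∈ unitary (Matrix (Fin 2) (Fin 2) ℂ) := by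
  have hsc : (Real.cos (Λ * t) : ℂ) ^ 2 + (Real.sin (Λ * t) : ℂ) ^ 2 = 1 := by
    exact_mod_cast Real.cos_sq_add_sin_sq (Λ * t)
  refine Matrix.mem_unitaryGroup_iff.2 ?_
  ext i j
  fin_cases i <;> fin_cases j <;>
    simp [freeMat, Matrix.mul_apply, ← sq, mul_comm, hsc, add_comm (_ ^ 2),
      -Complex.ofReal_cos, -Complex.ofReal_sin]

lemma hasDerivAt_freeMat (Λ t : ℝ) :
    HasDerivAt (freeMat Λ) (freeMat Λ t * sysMat Λ 0 t) t := by
  have hΛ : HasDerivAt (fun τ ↦ Λ * τ) Λ t := by simpa using (hasDerivAt_id t).const_mul Λ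
  have hcos := hΛ.cos.ofReal_comp
  have hsin := hΛ.sin.ofReal_comp
  have hneg_sin := hΛ.sin.neg.ofReal_comp
  refine hasDerivAt_of_forall_entry fun i j ↦ ?_
  fin_cases i <;> fin_cases j
  · exact hcos.congr_deriv (by simp [freeMat, sysMat, Matrix.mul_apply])
  · exact hsin.congr_deriv (by simp [freeMat, sysMat, Matrix.mul_apply])
  · exact hneg_sin.congr_deriv (by simp [freeMat, sysMat, Matrix.mul_apply])
  · exact hcos.congr_deriv (by simp [freeMat, sysMat, Matrix.mul_apply])

lemma continuous_freeMat (Λ : ℝ) : Continuous (freeMat Λ) :=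
  continuous_iff_continuousAt.2 fun t ↦ (hasDerivAt_freeMat Λ t).continuousAt

lemma integrableOn_interactionMat {S : Set ℝ} (hb : IntegrableOn b S) :
    IntegrableOn (interactionMat Λ b s) S := by
  have hfree : Continuous fun t ↦ freeMat Λ (s - t) :=
    (continuous_freeMat Λ).comp (continuous_const.sub continuous_id)
  refine Integrable.smul_bdd hb ‖dissipationMat‖
    ((hfree.mul continuous_const).mul hfree.star).aestronglyMeasurable
    (Eventually.of_forall fun t ↦ ?_)
  have hU := freeMat_mem_unitary Λ (s - t)
  rw [CStarRing.norm_mul_mem_unitary _ (Unitary.star_mem hU), CStarRing.norm_mem_unitary_mul _ hU]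

lemma hasDerivAt_freeMat_mul {E : ℝ → Matrix (Fin 2) (Fin 2) ℂ}
    (hE : HasDerivAt E (sysMat Λ b t * E t) t) :
    HasDerivAt (fun τ ↦ freeMat Λ (s - τ) * E τ)
      (interactionMat Λ b s t * (freeMat Λ (s - t) * E t)) t := by
  have hfree : HasDerivAt (fun τ ↦ freeMat Λ (s - τ)) (-(freeMat Λ (s - t) * sysMat Λ 0 t)) t :=
    (hasDerivAt_freeMat Λ (s - t)).comp_const_sub s t
  refine (hfree.mul hE).congr_deriv ?_
  have hU := Unitary.star_mul_self_of_mem (freeMat_mem_unitary Λ (s - t))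
  calc -(freeMat Λ (s - t) * sysMat Λ 0 t) * E t + freeMat Λ (s - t) * (sysMat Λ b t * E t)
      = b t • (freeMat Λ (s - t) * dissipationMat * E t) := by
        rw [sysMat_eq_add_smul_dissipationMat Λ b]
        simp only [add_mul, mul_add, smul_mul_assoc, mul_smul_comm, mul_assoc, neg_mul]
        abel
    _ = b t • (freeMat Λ (s - t) * dissipationMat *
          (star (freeMat Λ (s - t)) * freeMat Λ (s - t)) * E t) := by rw [hU, mul_one]
    _ = interactionMat Λ b s t * (freeMat Λ (s - t) * E t) := by
        simp only [interactionMat, smul_mul_assoc, mul_assoc]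

theorem Q_limit_invertible_general (Λ : ℝ) {b : ℝ → ℝ} {s : ℝ} (hb : IntegrableOn b (Ici s))
    {E : ℝ → Matrix (Fin 2) (Fin 2) ℂ} (hEs : IsUnit (E s))
    (hE : ∀ t ≥ s, ∀ i j, HasDerivAt (fun τ ↦ E τ i j) ((sysMat Λ b t * E t) i j) t) :
    ∃ Qinf : Matrix (Fin 2) (Fin 2) ℂ,
      Tendsto (fun t ↦ freeMat Λ (s - t) * E t) atTop (𝓝 Qinf) ∧ IsUnit Qinf := by
  have hR : IntegrableOn (interactionMat Λ b s) (Ici s) := integrableOn_interactionMat hb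
  have hQ : ∀ t ≥ s, HasDerivAt (fun τ ↦ freeMat Λ (s - τ) * E τ)
      (interactionMat Λ b s t * (freeMat Λ (s - t) * E t)) t := fun t ht ↦
    hasDerivAt_freeMat_mul (hasDerivAt_of_forall_entry (hE t ht))
  have hQs : IsUnit (freeMat Λ (s - s) * E s) :=
    (Unitary.isUnit_coe (U := ⟨_, freeMat_mem_unitary Λ (s - s)⟩)).mul hEs
  obtain ⟨Qinf, hlim⟩ := exists_tendsto_of_hasDerivAt_mul hQ hR
  exact ⟨Qinf, hlim, isUnit_of_tendsto_of_hasDerivAt_mul hQ hR hQs hlim⟩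

end InteractionPicture

/-- For integrable nonnegative dissipation `b`, the limit
`Q(∞,s) = lim_{t→∞} E₀(s−t)·E(t,s)` exists and is an invertible matrix. -/
theorem Q_limit_invertible
    (Λ : ℝ) (hΛ : 0 < Λ) (b : ℝ → ℝ)
    (hbc : ContinuousOn b (Set.Ici 0))
    (hb0 : ∀ t ≥ (0:ℝ), 0 ≤ b t) (hbi : IntegrableOn b (Set.Ici 0))
    (E : ℝ → ℝ → Matrix (Fin 2) (Fin 2) ℂ)
    (hE0 : ∀ s ≥ (0:ℝ), E s s = 1)
    (hE : ∀ s ≥ (0:ℝ), ∀ t ≥ s, ∀ i j : Fin 2,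
      HasDerivAt (fun τ => E τ s i j) ((sysMat Λ b t * E t s) i j) t) :
    ∀ s ≥ (0:ℝ), ∃ Qinf : Matrix (Fin 2) (Fin 2) ℂ,
      Tendsto (fun t => freeMat Λ (s - t) * E t s) atTop (nhds Qinf) ∧
      IsUnit Qinf := by
  intro s hs
  exact Q_limit_invertible_general Λ (hbi.mono_set (Ici_subset_Ici.2 hs))
    (hE0 s hs ▸ isUnit_one) (hE s hs)
end

section
/- Let b : [0,∞) → ℝ be continuously differentiable with b(t) ≥ 0, b(t) ≤ C₁(1+t)^{−1} and |b'(t)| ≤ C₂(1+t)^{−2} for all t ≥ 0, and assume limsup_{t→∞} t·b(t) < 1/2. Set λ(t) = exp(∫₀^t b(τ)dτ). Let N > C₁, γ ≥ 0 and K > 0 be such that Λ^γ·λ(t)² ≤ K whenever Λ(1+t) ≤ N. Then there is a constant C > 0 (depending only on b, N, γ, K) such that for all Λ with 0 < Λ ≤ N and all t ≥ 0, the fundamental solution E(t,0) of the dissipative system satisfies |E(t,0)_{11}| ≤ C·Λ^{−γ}/λ(t), |E(t,0)_{21}| ≤ C·Λ^{−γ}/λ(t), |E(t,0)_{12}| ≤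 C/λ(t), |E(t,0)_{22}| ≤ C/λ(t). -/
open MeasureTheory Filter

/-- The auxiliary function `λ(t) = exp(∫₀^t b)`. -/
noncomputable def lam (b : ℝ → ℝ) (t : ℝ) : ℝ := Real.exp (∫ τ in (0:ℝ)..t, b τ)

/-!
Each column of `E` is a pair `(v, w)` with `v' = Λw` and `w' = -Λv - 2bw`, and it suffices to bound
`λ` times its Euclidean norm.

In the hyperbolic zone `Λ(1+t) ≥ N`, correct the weighted energy `λ²(‖v‖² + ‖w‖²)` by the cross
term `2λ²(b/Λ)⟪v, w⟫`. The derivative of the sum is `2λ²(b'/Λ)⟪v, w⟫`, and `|b'|/Λ` has integral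
`O(1/N)` over the zone. Since `b/Λ ≤ C₁/N < 1` there, the corrected energy is comparable to the
weighted one, so a bound at the entry of the zone propagates to all later times.

In the dissipative zone `Λ(1+t) ≤ N`, the first column is controlled by the decay of the unweighted
energy together with `λ ≤ KΛ^(-γ)`. The second column starts with `v(0) = 0`, so integrating
`(λ²w)' = -Λλ²v` and `v' = Λw`, with `λ(t) ∫₀ᵗ 1/λ ≤ D(1+t)`, yields a Gronwall inequality with
exponent `O((Λ(1+t))²)`, bounded by `O(N²)`. The estimate of `∫₀ᵗ 1/λ` follows by comparing
derivatives, because `(1+t)b(t)` eventually stays below a constant less than `1`.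
-/

open Set

section Calculus

variable {F : Type*} [NormedAddCommGroup F] [NormedSpace ℝ F] {s t : ℝ}

lemma continuousOn_Ici_of_hasDerivWithinAt {f f' : ℝ → F}
    (hf : ∀ x ≥ s, HasDerivWithinAt f (f' x) (Ici s) x) : ContinuousOn f (Ici s) :=
  fun x hx => (hf x hx).continuousWithinAt

lemma hasDerivWithinAt_integral_Ici [CompleteSpace F] {g : ℝ → F} (hg : ContinuousOn g (Ici s))
    (hst : s ≤ t) : HasDerivWithinAt (fun x => ∫ τ in s..x, g τ) (g t) (Ici s) t := by
  have hsub : Icc s (t + 1) ⊆ Ici s := Icc_subset_Ici_self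
  have ht : t ∈ Icc s (t + 1) := ⟨hst, by linarith⟩
  have : Fact (t ∈ Icc s (t + 1)) := ⟨ht⟩
  have hint : IntervalIntegrable g volume s t :=
    (hg.mono Icc_subset_Ici_self).intervalIntegrable_of_Icc hst
  have hmeas : StronglyMeasurableAtFilter g (nhdsWithin t (Icc s (t + 1))) :=
    (hg.mono hsub).stronglyMeasurableAtFilter_nhdsWithin measurableSet_Icc t
  have hnhds : Icc s (t + 1) ∈ nhdsWithin t (Ici s) := by
    rw [← Ici_inter_Iic]
    exact inter_mem_nhdsWithin _ (Iic_mem_nhds (by linarith))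
  exact (intervalIntegral.integral_hasDerivWithinAt_right hint hmeas
    ((hg.mono hsub) t ht)).mono_of_mem_nhdsWithin hnhds

lemma antitoneOn_Ici_of_hasDerivWithinAt_nonpos {f f' : ℝ → ℝ}
    (hf : ∀ x ≥ s, HasDerivWithinAt f (f' x) (Ici s) x) (hf' : ∀ x ≥ s, f' x ≤ 0) :
    AntitoneOn f (Ici s) :=
  antitoneOn_of_hasDerivWithinAt_nonpos (convex_Ici s) (continuousOn_Ici_of_hasDerivWithinAt hf)
    (fun x hx => (hf x (interior_subset hx)).mono interior_subset)
    (fun x hx => hf' x (interior_subset hx))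

lemma norm_le_of_norm_deriv_le_deriv_Ici {f f' : ℝ → F} {B B' : ℝ → ℝ}
    (hf : ∀ x ≥ s, HasDerivWithinAt f (f' x) (Ici s) x)
    (hB : ∀ x ≥ s, HasDerivWithinAt B (B' x) (Ici s) x)
    (hs : ‖f s‖ ≤ B s) (bound : ∀ x ≥ s, ‖f' x‖ ≤ B' x) (hst : s ≤ t) : ‖f t‖ ≤ B t :=
  image_norm_le_of_norm_deriv_right_le_deriv_boundary'
    ((continuousOn_Ici_of_hasDerivWithinAt hf).mono Icc_subset_Ici_self)
    (fun x hx => (hf x hx.1).mono (Ici_subset_Ici.2 hx.1)) hs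
    ((continuousOn_Ici_of_hasDerivWithinAt hB).mono Icc_subset_Ici_self)
    (fun x hx => (hB x hx.1).mono (Ici_subset_Ici.2 hx.1))
    (fun x hx => bound x hx.1) (right_mem_Icc.2 hst)

lemma le_mul_exp_sub_of_deriv_le_mul {f f' a a' : ℝ → ℝ}
    (hf : ∀ x ≥ s, HasDerivWithinAt f (f' x) (Ici s) x)
    (ha : ∀ x ≥ s, HasDerivWithinAt a (a' x) (Ici s) x)
    (hle : ∀ x ≥ s, f' x ≤ a' x * f x) (hst : s ≤ t) :
    f t ≤ f s * Real.exp (a t - a s) := by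
  have hanti : AntitoneOn (fun x => f x * Real.exp (-a x)) (Ici s) := by
    refine antitoneOn_Ici_of_hasDerivWithinAt_nonpos
      (fun x hx => (hf x hx).mul (ha x hx).fun_neg.exp) (fun x hx => ?_)
    nlinarith [mul_le_mul_of_nonneg_right (hle x hx) (Real.exp_pos (-a x)).le]
  calc f t = f t * Real.exp (-a t) * Real.exp (a t) := by
        rw [mul_assoc, ← Real.exp_add, neg_add_cancel, Real.exp_zero, mul_one]
    _ ≤ f s * Real.exp (-a s) * Real.exp (a t) := by
        exact mul_le_mul_of_nonneg_right (hanti self_mem_Ici hst hst) (Real.exp_pos _).le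
    _ = f s * Real.exp (a t - a s) := by
        rw [mul_assoc, ← Real.exp_add, neg_add_eq_sub]

end Calculus

section Lam

variable {b : ℝ → ℝ} {s t : ℝ}

lemma lam_pos (b : ℝ → ℝ) (t : ℝ) : 0 < lam b t := Real.exp_pos _

@[simp]
lemma lam_zero (b : ℝ → ℝ) : lam b 0 = 1 := by simp [lam]

lemma hasDerivWithinAt_lam (hb : ContinuousOn b (Ici 0)) (ht : 0 ≤ t) :
    HasDerivWithinAt (lam b) (lam b t * b t) (Ici 0) t :=
  (hasDerivWithinAt_integral_Ici hb ht).exp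

lemma continuousOn_lam (hb : ContinuousOn b (Ici 0)) : ContinuousOn (lam b) (Ici 0) :=
  continuousOn_Ici_of_hasDerivWithinAt fun _ => hasDerivWithinAt_lam hb

lemma continuousOn_inv_lam (hb : ContinuousOn b (Ici 0)) :
    ContinuousOn (fun t => (lam b t)⁻¹) (Ici 0) :=
  (continuousOn_lam hb).inv₀ fun t _ => (lam_pos b t).ne'

lemma monotoneOn_lam (hb : ContinuousOn b (Ici 0)) (hb0 : ∀ t ≥ 0, 0 ≤ b t) :
    MonotoneOn (lam b) (Ici 0) :=
  monotoneOn_of_hasDerivWithinAt_nonneg (convex_Ici 0) (continuousOn_lam hb)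
    (fun _ hx => (hasDerivWithinAt_lam hb (interior_subset hx)).mono interior_subset)
    (fun x hx => mul_nonneg (lam_pos b x).le (hb0 x (interior_subset hx)))

lemma one_le_lam (hb : ContinuousOn b (Ici 0)) (hb0 : ∀ t ≥ 0, 0 ≤ b t) (ht : 0 ≤ t) :
    1 ≤ lam b t :=
  lam_zero b ▸ monotoneOn_lam hb hb0 self_mem_Ici ht ht

lemma lam_le_lam_sq (hb : ContinuousOn b (Ici 0)) (hb0 : ∀ t ≥ 0, 0 ≤ b t) (ht : 0 ≤ t) :
    lam b t ≤ lam b t ^ 2 :=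
  le_self_pow₀ (one_le_lam hb hb0 ht) two_ne_zero

lemma integral_inv_lam_nonneg (b : ℝ → ℝ) (ht : 0 ≤ t) : 0 ≤ ∫ τ in (0 : ℝ)..t, (lam b τ)⁻¹ :=
  intervalIntegral.integral_nonneg ht fun τ _ => (inv_pos.2 (lam_pos b τ)).le

lemma integral_inv_lam_le_self (hb : ContinuousOn b (Ici 0)) (hb0 : ∀ t ≥ 0, 0 ≤ b t)
    (ht : 0 ≤ t) : ∫ τ in (0 : ℝ)..t, (lam b τ)⁻¹ ≤ t := by
  have hint : IntervalIntegrable (fun τ => (lam b τ)⁻¹) volume 0 t :=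
    ((continuousOn_inv_lam hb).mono Icc_subset_Ici_self).intervalIntegrable_of_Icc ht
  calc ∫ τ in (0 : ℝ)..t, (lam b τ)⁻¹ ≤ ∫ _ in (0 : ℝ)..t, (1 : ℝ) :=
        intervalIntegral.integral_mono_on ht hint intervalIntegrable_const
          fun τ hτ => inv_le_one_of_one_le₀ (one_le_lam hb hb0 hτ.1)
    _ = t := by simp

lemma antitoneOn_integral_inv_lam_sub (hb : ContinuousOn b (Ici 0)) {D T : ℝ} (hT : 0 ≤ T)
    (hD : ∀ t ≥ T, 1 ≤ D * (1 - (1 + t) * b t)) :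
    AntitoneOn (fun t => (∫ τ in (0 : ℝ)..t, (lam b τ)⁻¹) - D * (1 + t) * (lam b t)⁻¹)
      (Ici T) := by
  have hderiv : ∀ t ≥ T, HasDerivWithinAt
      (fun t => (∫ τ in (0 : ℝ)..t, (lam b τ)⁻¹) - D * (1 + t) * (lam b t)⁻¹)
      ((1 - D * (1 - (1 + t) * b t)) * (lam b t)⁻¹) (Ici T) t := by
    intro t ht
    have ht0 : 0 ≤ t := hT.trans ht
    have hlam := (lam_pos b t).ne'
    refine (((hasDerivWithinAt_integral_Ici (continuousOn_inv_lam hb) ht0).sub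
      ((((hasDerivWithinAt_id t _).const_add 1).const_mul D).mul
        ((hasDerivWithinAt_lam hb ht0).inv hlam))).congr_deriv ?_).mono (Ici_subset_Ici.2 hT)
    simp only [id_eq, Pi.inv_apply]
    field_simp
    ring
  refine antitoneOn_Ici_of_hasDerivWithinAt_nonpos hderiv fun t ht => ?_
  exact mul_nonpos_of_nonpos_of_nonneg (by linarith [hD t ht]) (inv_pos.2 (lam_pos b t)).le

lemma exists_eventually_one_add_mul_le {μ κ : ℝ} (hμ : μ < κ) (hb : ∀ᶠ t in atTop, t * b t ≤ μ) :
    ∃ ν < κ, ∀ᶠ t in atTop, (1 + t) * b t ≤ ν := by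
  obtain ⟨ν, hμν, hνκ⟩ := exists_between hμ
  have hlim : Tendsto (fun t : ℝ => (1 + t⁻¹) * μ) atTop (nhds μ) := by
    simpa using (tendsto_inv_atTop_zero.const_add (1 : ℝ)).mul_const μ
  refine ⟨ν, hνκ, ?_⟩
  filter_upwards [hb, hlim.eventually_le_const hμν, eventually_gt_atTop 0] with t htb htν ht
  calc (1 + t) * b t = (1 + t⁻¹) * (t * b t) := by field_simp; ring
    _ ≤ (1 + t⁻¹) * μ := by gcongr
    _ ≤ ν := htν

lemma exists_integral_inv_lam_le (hb : ContinuousOn b (Ici 0)) (hb0 : ∀ t ≥ 0, 0 ≤ b t)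
    (hlimsup : ∃ μ < (1 : ℝ), ∀ᶠ t in atTop, t * b t ≤ μ) :
    ∃ D > 0, ∀ t ≥ 0, ∫ τ in (0 : ℝ)..t, (lam b τ)⁻¹ ≤ D * (1 + t) * (lam b t)⁻¹ := by
  obtain ⟨μ, hμ, hμb⟩ := hlimsup
  obtain ⟨ν, hν, hνb⟩ := exists_eventually_one_add_mul_le hμ hμb
  obtain ⟨T₀, hT₀⟩ := eventually_atTop.1 hνb
  set T := max T₀ 0
  have hT : 0 ≤ T := le_max_right _ _
  have hlamT := lam_pos b T
  have hgap : 0 < 1 - ν := sub_pos.2 hν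
  set D := (1 - ν)⁻¹ + T * lam b T
  have hD : 0 < D := by positivity
  have hinit : ∀ t ∈ Icc 0 T, ∫ τ in (0 : ℝ)..t, (lam b τ)⁻¹ ≤ D * (1 + t) * (lam b t)⁻¹ := by
    intro t ht
    refine (integral_inv_lam_le_self hb hb0 ht.1).trans ?_
    rw [← div_eq_mul_inv, le_div_iff₀ (lam_pos b t)]
    calc t * lam b t ≤ T * lam b T :=
          mul_le_mul ht.2 (monotoneOn_lam hb hb0 ht.1 hT ht.2) (lam_pos b t).le hT
      _ ≤ D := le_add_of_nonneg_left (inv_pos.2 hgap).le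
      _ ≤ D * (1 + t) := le_mul_of_one_le_right hD.le (by linarith [ht.1])
  have htail : ∀ t ≥ T, 1 ≤ D * (1 - (1 + t) * b t) := by
    intro t ht
    have hνt := hT₀ t ((le_max_left _ _).trans ht)
    calc 1 = (1 - ν)⁻¹ * (1 - ν) := (inv_mul_cancel₀ hgap.ne').symm
      _ ≤ D * (1 - (1 + t) * b t) :=
        mul_le_mul (le_add_of_nonneg_right (by positivity)) (by linarith) hgap.le hD.le
  refine ⟨D, hD, fun t ht => ?_⟩
  rcases le_total t T with htT | hTt
  · exact hinit t ⟨ht, htT⟩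
  · have hdecr := antitoneOn_integral_inv_lam_sub hb hT htail self_mem_Ici hTt hTt
    linarith [hinit T ⟨hT, le_rfl⟩]

end Lam

/-- The pair `(‖v‖, ‖w‖)` measured in the Euclidean norm; its square is the energy of `(v, w)`. -/
noncomputable def phaseNorm {F : Type*} [Norm F] (v w : ℝ → F) (t : ℝ) : ℝ :=
  √(‖v t‖ ^ 2 + ‖w t‖ ^ 2)

/-- `(v, w) = (Λu, u')` solves the dissipative system on `[0, ∞)` with values in `F`. Derivatives
are taken within `[0, ∞)`, hence one-sided at `0`. -/
structure IsDissipativeSolution {F : Type*} [NormedAddCommGroup F] [NormedSpace ℝ F]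
    (b : ℝ → ℝ) (Λ : ℝ) (v w : ℝ → F) : Prop where
  hasDerivWithinAt_fst : ∀ t ≥ 0, HasDerivWithinAt v (Λ • w t) (Ici 0) t
  hasDerivWithinAt_snd : ∀ t ≥ 0,
    HasDerivWithinAt w (-(Λ • v t) - (2 * b t) • w t) (Ici 0) t

section PhaseNorm

variable {F : Type*} [NormedAddCommGroup F]

lemma phaseNorm_nonneg (v w : ℝ → F) (t : ℝ) : 0 ≤ phaseNorm v w t := Real.sqrt_nonneg _

lemma phaseNorm_sq (v w : ℝ → F) (t : ℝ) : phaseNorm v w t ^ 2 = ‖v t‖ ^ 2 + ‖w t‖ ^ 2 :=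
  Real.sq_sqrt (by positivity)

lemma norm_fst_le_phaseNorm (v w : ℝ → F) (t : ℝ) : ‖v t‖ ≤ phaseNorm v w t :=
  Real.le_sqrt_of_sq_le (le_add_of_nonneg_right (sq_nonneg _))

lemma norm_snd_le_phaseNorm (v w : ℝ → F) (t : ℝ) : ‖w t‖ ≤ phaseNorm v w t :=
  Real.le_sqrt_of_sq_le (le_add_of_nonneg_left (sq_nonneg _))

lemma phaseNorm_le_add (v w : ℝ → F) (t : ℝ) : phaseNorm v w t ≤ ‖v t‖ + ‖w t‖ :=
  Real.sqrt_le_iff.2 ⟨by positivity, by nlinarith [norm_nonneg (v t), norm_nonneg (w t)]⟩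

lemma two_mul_abs_inner_le_phaseNorm_sq [InnerProductSpace ℝ F] (v w : ℝ → F) (t : ℝ) :
    2 * |inner ℝ (v t) (w t)| ≤ phaseNorm v w t ^ 2 := by
  rw [phaseNorm_sq]
  linarith [abs_real_inner_le_norm (v t) (w t), two_mul_le_add_sq ‖v t‖ ‖w t‖]

lemma norm_fst_le_div_lam {b : ℝ → ℝ} {v w : ℝ → F} {t B : ℝ}
    (h : lam b t * phaseNorm v w t ≤ B) : ‖v t‖ ≤ B / lam b t :=
  (norm_fst_le_phaseNorm v w t).trans ((le_div_iff₀' (lam_pos b t)).2 h)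

lemma norm_snd_le_div_lam {b : ℝ → ℝ} {v w : ℝ → F} {t B : ℝ}
    (h : lam b t * phaseNorm v w t ≤ B) : ‖w t‖ ≤ B / lam b t :=
  (norm_snd_le_phaseNorm v w t).trans ((le_div_iff₀' (lam_pos b t)).2 h)

end PhaseNorm

/-- A majorant of `λ(t)‖w(t)‖` obtained by integrating `(λ²w)' = -Λλ²v`; Gronwall's inequality is
applied to it rather than to `‖w‖` because it is differentiable. -/
noncomputable def sndMajorant {F : Type*} [Norm F] (b : ℝ → ℝ) (Λ : ℝ)
    (v w : ℝ → F) (t : ℝ) : ℝ :=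
  ‖w 0‖ + ∫ τ in (0 : ℝ)..t, Λ * (lam b τ * ‖v τ‖)

lemma sndMajorant_nonneg {F : Type*} [NormedAddCommGroup F] {b : ℝ → ℝ} {Λ t : ℝ}
    {v w : ℝ → F} (hΛ : 0 ≤ Λ) (ht : 0 ≤ t) : 0 ≤ sndMajorant b Λ v w t :=
  add_nonneg (norm_nonneg _) <| intervalIntegral.integral_nonneg ht fun τ _ =>
    mul_nonneg hΛ (mul_nonneg (lam_pos b τ).le (norm_nonneg _))

/-- The weighted energy `λ²(‖v‖² + ‖w‖²)` corrected by a cross term. The correction cancels every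
contribution of `b` to the derivative and leaves only one of `b'`, which is integrable in the
hyperbolic zone. -/
noncomputable def modifiedEnergy {F : Type*} [NormedAddCommGroup F] [InnerProductSpace ℝ F]
    (b : ℝ → ℝ) (Λ : ℝ) (v w : ℝ → F) (t : ℝ) : ℝ :=
  lam b t ^ 2 * (‖v t‖ ^ 2 + ‖w t‖ ^ 2 + b t / Λ * (2 * inner ℝ (v t) (w t)))

section ModifiedEnergy

variable {F : Type*} [NormedAddCommGroup F] [InnerProductSpace ℝ F]
  {b : ℝ → ℝ} {Λ q t : ℝ} {v w : ℝ → F}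

lemma abs_lam_sq_mul_inner_le (b : ℝ → ℝ) (v w : ℝ → F) (t β : ℝ) :
    |lam b t ^ 2 * (β * (2 * inner ℝ (v t) (w t)))| ≤ |β| * (lam b t * phaseNorm v w t) ^ 2 := by
  rw [abs_mul, abs_mul, abs_mul, abs_two, abs_of_nonneg (sq_nonneg (lam b t)), mul_pow,
    mul_left_comm]
  gcongr
  exact two_mul_abs_inner_le_phaseNorm_sq v w t

lemma abs_modifiedEnergy_sub_le (hΛ : 0 < Λ) (hbq : |b t| ≤ q * Λ) :
    |modifiedEnergy b Λ v w t - (lam b t * phaseNorm v w t) ^ 2| ≤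
      q * (lam b t * phaseNorm v w t) ^ 2 := by
  have hratio : |b t / Λ| ≤ q := by rwa [abs_div, abs_of_pos hΛ, div_le_iff₀ hΛ]
  have hcross : modifiedEnergy b Λ v w t - (lam b t * phaseNorm v w t) ^ 2 =
      lam b t ^ 2 * (b t / Λ * (2 * inner ℝ (v t) (w t))) := by
    rw [mul_pow, phaseNorm_sq, modifiedEnergy]
    ring
  rw [hcross]
  exact (abs_lam_sq_mul_inner_le b v w t _).trans (by gcongr)

lemma one_sub_mul_le_modifiedEnergy (hΛ : 0 < Λ) (hbq : |b t| ≤ q * Λ) :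
    (1 - q) * (lam b t * phaseNorm v w t) ^ 2 ≤ modifiedEnergy b Λ v w t := by
  linarith [(abs_le.1 (abs_modifiedEnergy_sub_le (v := v) (w := w) hΛ hbq)).1]

lemma modifiedEnergy_le_one_add_mul (hΛ : 0 < Λ) (hbq : |b t| ≤ q * Λ) :
    modifiedEnergy b Λ v w t ≤ (1 + q) * (lam b t * phaseNorm v w t) ^ 2 := by
  linarith [(abs_le.1 (abs_modifiedEnergy_sub_le (v := v) (w := w) hΛ hbq)).2]

lemma modifiedEnergy_nonneg (hΛ : 0 < Λ) (hq : q ≤ 1) (hbq : |b t| ≤ q * Λ) :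
    0 ≤ modifiedEnergy b Λ v w t :=
  (mul_nonneg (sub_nonneg.2 hq) (sq_nonneg _)).trans (one_sub_mul_le_modifiedEnergy hΛ hbq)

lemma lam_sq_mul_inner_le_modifiedEnergy (hΛ : 0 < Λ) (hq : q < 1) (hbq : |b t| ≤ q * Λ)
    (β : ℝ) :
    lam b t ^ 2 * (β / Λ * (2 * inner ℝ (v t) (w t))) ≤
      |β| / (1 - q) / Λ * modifiedEnergy b Λ v w t := by
  have hgap : 0 < 1 - q := sub_pos.2 hq
  calc lam b t ^ 2 * (β / Λ * (2 * inner ℝ (v t) (w t)))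
      ≤ |β / Λ| * (lam b t * phaseNorm v w t) ^ 2 :=
        (le_abs_self _).trans (abs_lam_sq_mul_inner_le b v w t _)
    _ = |β| / (1 - q) / Λ * ((1 - q) * (lam b t * phaseNorm v w t) ^ 2) := by
        rw [abs_div, abs_of_pos hΛ]
        field_simp
    _ ≤ |β| / (1 - q) / Λ * modifiedEnergy b Λ v w t := by
        gcongr
        exact one_sub_mul_le_modifiedEnergy hΛ hbq

end ModifiedEnergy

namespace IsDissipativeSolution

section DissipativeZone

variable {F : Type*} [NormedAddCommGroup F] [NormedSpace ℝ F]
  {b : ℝ → ℝ} {Λ D N : ℝ} {v w : ℝ → F} {t : ℝ}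

lemma hasDerivWithinAt_sndMajorant (hsol : IsDissipativeSolution b Λ v w)
    (hb : ContinuousOn b (Ici 0)) (ht : 0 ≤ t) :
    HasDerivWithinAt (sndMajorant b Λ v w) (Λ * (lam b t * ‖v t‖)) (Ici 0) t := by
  have hv : ContinuousOn v (Ici 0) :=
    continuousOn_Ici_of_hasDerivWithinAt hsol.hasDerivWithinAt_fst
  exact (hasDerivWithinAt_integral_Ici
    (continuousOn_const.mul ((continuousOn_lam hb).mul hv.norm)) ht).const_add _

lemma hasDerivWithinAt_lam_sq_smul_snd (hsol : IsDissipativeSolution b Λ v w)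
    (hb : ContinuousOn b (Ici 0)) (ht : 0 ≤ t) :
    HasDerivWithinAt (fun x => lam b x ^ 2 • w x) (-(Λ * lam b t ^ 2) • v t) (Ici 0) t := by
  refine (((hasDerivWithinAt_lam hb ht).fun_pow 2).fun_smul
    (hsol.hasDerivWithinAt_snd t ht)).congr_deriv ?_
  simp only [Nat.cast_ofNat]
  module

lemma lam_mul_norm_snd_le_sndMajorant (hsol : IsDissipativeSolution b Λ v w)
    (hb : ContinuousOn b (Ici 0)) (hb0 : ∀ t ≥ 0, 0 ≤ b t) (hΛ : 0 ≤ Λ) (ht : 0 ≤ t) :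
    lam b t * ‖w t‖ ≤ sndMajorant b Λ v w t := by
  have hlam := lam_pos b
  have hnorm : ‖lam b t ^ 2 • w t‖ ≤ lam b t * sndMajorant b Λ v w t := by
    refine norm_le_of_norm_deriv_le_deriv_Ici
      (fun x hx => hsol.hasDerivWithinAt_lam_sq_smul_snd hb hx)
      (fun x hx => (hasDerivWithinAt_lam hb hx).mul (hsol.hasDerivWithinAt_sndMajorant hb hx))
      (by simp [sndMajorant]) (fun x hx => ?_) ht
    have hgrow : 0 ≤ lam b x * b x * sndMajorant b Λ v w x :=
      mul_nonneg (mul_nonneg (hlam x).le (hb0 x hx)) (sndMajorant_nonneg hΛ hx)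
    rw [norm_smul, norm_neg, Real.norm_of_nonneg (by positivity)]
    linarith
  rw [norm_smul, Real.norm_of_nonneg (by positivity), sq, mul_assoc] at hnorm
  exact le_of_mul_le_mul_left hnorm (hlam t)

lemma norm_fst_le_sndMajorant_mul_integral (hsol : IsDissipativeSolution b Λ v w)
    (hb : ContinuousOn b (Ici 0)) (hb0 : ∀ t ≥ 0, 0 ≤ b t) (hΛ : 0 ≤ Λ) (hv0 : v 0 = 0)
    (ht : 0 ≤ t) :
    ‖v t‖ ≤ Λ * (sndMajorant b Λ v w t * ∫ τ in (0 : ℝ)..t, (lam b τ)⁻¹) := by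
  refine norm_le_of_norm_deriv_le_deriv_Ici hsol.hasDerivWithinAt_fst
    (fun x hx => ((hsol.hasDerivWithinAt_sndMajorant hb hx).mul
      (hasDerivWithinAt_integral_Ici (continuousOn_inv_lam hb) hx)).const_mul Λ)
    (by simp [hv0]) (fun x hx => ?_) ht
  have hlam := lam_pos b x
  have hw : ‖w x‖ ≤ sndMajorant b Λ v w x * (lam b x)⁻¹ := by
    rw [← div_eq_mul_inv, le_div_iff₀' hlam]
    exact hsol.lam_mul_norm_snd_le_sndMajorant hb hb0 hΛ hx
  have hgrow : 0 ≤ Λ * (lam b x * ‖v x‖) * ∫ τ in (0 : ℝ)..x, (lam b τ)⁻¹ :=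
    mul_nonneg (by positivity) (integral_inv_lam_nonneg b hx)
  rw [norm_smul, Real.norm_of_nonneg hΛ]
  exact mul_le_mul_of_nonneg_left (hw.trans (le_add_of_nonneg_left hgrow)) hΛ

lemma lam_mul_norm_fst_le_sndMajorant (hsol : IsDissipativeSolution b Λ v w)
    (hb : ContinuousOn b (Ici 0)) (hb0 : ∀ t ≥ 0, 0 ≤ b t) (hΛ : 0 ≤ Λ)
    (hD : ∀ t ≥ 0, ∫ τ in (0 : ℝ)..t, (lam b τ)⁻¹ ≤ D * (1 + t) * (lam b t)⁻¹)
    (hv0 : v 0 = 0) (ht : 0 ≤ t) :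
    lam b t * ‖v t‖ ≤ D * (Λ * (1 + t)) * sndMajorant b Λ v w t := by
  have hlam := lam_pos b t
  have hY : 0 ≤ sndMajorant b Λ v w t := sndMajorant_nonneg hΛ ht
  calc lam b t * ‖v t‖
      ≤ lam b t * (Λ * (sndMajorant b Λ v w t * ∫ τ in (0 : ℝ)..t, (lam b τ)⁻¹)) := by
        gcongr
        exact hsol.norm_fst_le_sndMajorant_mul_integral hb hb0 hΛ hv0 ht
    _ ≤ lam b t * (Λ * (sndMajorant b Λ v w t * (D * (1 + t) * (lam b t)⁻¹))) := by
        gcongr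
        exact hD t ht
    _ = D * (Λ * (1 + t)) * sndMajorant b Λ v w t := by field_simp

lemma sndMajorant_le_mul_exp (hsol : IsDissipativeSolution b Λ v w)
    (hb : ContinuousOn b (Ici 0)) (hb0 : ∀ t ≥ 0, 0 ≤ b t) (hΛ : 0 ≤ Λ) (hD0 : 0 ≤ D)
    (hD : ∀ t ≥ 0, ∫ τ in (0 : ℝ)..t, (lam b τ)⁻¹ ≤ D * (1 + t) * (lam b t)⁻¹)
    (hv0 : v 0 = 0) (ht : 0 ≤ t) :
    sndMajorant b Λ v w t ≤ ‖w 0‖ * Real.exp (D * (Λ * (1 + t)) ^ 2 / 2) := by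
  have hrate : ∀ x ≥ 0, HasDerivWithinAt (fun x => D * (Λ * (1 + x)) ^ 2 / 2)
      (Λ * (D * (Λ * (1 + x)))) (Ici 0) x := by
    intro x _
    refine (((((hasDerivWithinAt_id x (Ici 0)).const_add 1).const_mul Λ).fun_pow 2).const_mul
      D).div_const 2 |>.congr_deriv ?_
    simp only [id_eq]
    ring
  have hgronwall := le_mul_exp_sub_of_deriv_le_mul
    (fun x hx => hsol.hasDerivWithinAt_sndMajorant hb hx) hrate (fun x hx => ?_) ht
  · refine hgronwall.trans ?_
    have hstart : sndMajorant b Λ v w 0 = ‖w 0‖ := by simp [sndMajorant]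
    rw [hstart]
    gcongr
    exact sub_le_self _ (by positivity)
  · rw [mul_assoc]
    exact mul_le_mul_of_nonneg_left
      (hsol.lam_mul_norm_fst_le_sndMajorant hb hb0 hΛ hD hv0 hx) hΛ

lemma lam_mul_phaseNorm_le_of_mem_dissipativeZone (hsol : IsDissipativeSolution b Λ v w)
    (hb : ContinuousOn b (Ici 0)) (hb0 : ∀ t ≥ 0, 0 ≤ b t) (hΛ : 0 ≤ Λ) (hD0 : 0 ≤ D)
    (hD : ∀ t ≥ 0, ∫ τ in (0 : ℝ)..t, (lam b τ)⁻¹ ≤ D * (1 + t) * (lam b t)⁻¹)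
    (hv0 : v 0 = 0) (ht : 0 ≤ t) (hzone : Λ * (1 + t) ≤ N) :
    lam b t * phaseNorm v w t ≤ (D * N + 1) * Real.exp (D * N ^ 2 / 2) * ‖w 0‖ := by
  have hzone0 : 0 ≤ Λ * (1 + t) := by positivity
  have hN : 0 ≤ N := hzone0.trans hzone
  have hY : 0 ≤ sndMajorant b Λ v w t := sndMajorant_nonneg hΛ ht
  have hYexp : sndMajorant b Λ v w t ≤ ‖w 0‖ * Real.exp (D * N ^ 2 / 2) :=
    (hsol.sndMajorant_le_mul_exp hb hb0 hΛ hD0 hD hv0 ht).trans (by gcongr)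
  calc lam b t * phaseNorm v w t ≤ lam b t * (‖v t‖ + ‖w t‖) :=
        mul_le_mul_of_nonneg_left (phaseNorm_le_add v w t) (lam_pos b t).le
    _ = lam b t * ‖v t‖ + lam b t * ‖w t‖ := mul_add _ _ _
    _ ≤ D * (Λ * (1 + t)) * sndMajorant b Λ v w t + sndMajorant b Λ v w t :=
        add_le_add (hsol.lam_mul_norm_fst_le_sndMajorant hb hb0 hΛ hD hv0 ht)
          (hsol.lam_mul_norm_snd_le_sndMajorant hb hb0 hΛ ht)
    _ = (D * (Λ * (1 + t)) + 1) * sndMajorant b Λ v w t := by ring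
    _ ≤ (D * N + 1) * (‖w 0‖ * Real.exp (D * N ^ 2 / 2)) := by gcongr
    _ = (D * N + 1) * Real.exp (D * N ^ 2 / 2) * ‖w 0‖ := by ring

end DissipativeZone

section EnergyDecay

variable {F : Type*} [NormedAddCommGroup F] [InnerProductSpace ℝ F]
  {b : ℝ → ℝ} {Λ γ K t : ℝ} {v w : ℝ → F}

lemma antitoneOn_phaseNorm (hsol : IsDissipativeSolution b Λ v w) (hb0 : ∀ t ≥ 0, 0 ≤ b t) :
    AntitoneOn (phaseNorm v w) (Ici 0) := by
  have henergy : AntitoneOn (fun t => ‖v t‖ ^ 2 + ‖w t‖ ^ 2) (Ici 0) := by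
    refine antitoneOn_Ici_of_hasDerivWithinAt_nonpos (f' := fun t => -(4 * (b t * ‖w t‖ ^ 2)))
      (fun t ht => ?_) (fun t ht => ?_)
    · refine ((hsol.hasDerivWithinAt_fst t ht).norm_sq.add
        (hsol.hasDerivWithinAt_snd t ht).norm_sq).congr_deriv ?_
      simp only [inner_sub_right, inner_neg_right, real_inner_smul_right,
        real_inner_self_eq_norm_sq, real_inner_comm (v t) (w t)]
      ring
    · have := mul_nonneg (hb0 t ht) (sq_nonneg ‖w t‖)
      linarith
  exact fun s hs t ht hst => Real.sqrt_le_sqrt (henergy hs ht hst)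

lemma lam_mul_phaseNorm_le_of_rpow_mul_lam_le (hsol : IsDissipativeSolution b Λ v w)
    (hb0 : ∀ t ≥ 0, 0 ≤ b t) (hΛ : 0 < Λ) (ht : 0 ≤ t) (hK : Λ ^ γ * lam b t ≤ K) :
    lam b t * phaseNorm v w t ≤ K * Λ ^ (-γ) * phaseNorm v w 0 := by
  have hlam : lam b t ≤ K * Λ ^ (-γ) := by
    rwa [Real.rpow_neg hΛ.le, ← div_eq_mul_inv, le_div_iff₀' (Real.rpow_pos_of_pos hΛ γ)]
  exact mul_le_mul hlam (hsol.antitoneOn_phaseNorm hb0 self_mem_Ici ht ht) (phaseNorm_nonneg v w t)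
    ((lam_pos b t).le.trans hlam)

end EnergyDecay

section HyperbolicZone

variable {F : Type*} [NormedAddCommGroup F] [InnerProductSpace ℝ F]
  {b b' : ℝ → ℝ} {Λ q C₂ N : ℝ} {v w : ℝ → F} {s t : ℝ}

lemma hasDerivWithinAt_modifiedEnergy (hsol : IsDissipativeSolution b Λ v w)
    (hb' : ∀ t ≥ 0, HasDerivWithinAt b (b' t) (Ici 0) t) (hΛ : Λ ≠ 0) (ht : 0 ≤ t) :
    HasDerivWithinAt (modifiedEnergy b Λ v w)
      (lam b t ^ 2 * (b' t / Λ * (2 * inner ℝ (v t) (w t)))) (Ici 0) t := by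
  have hlam := hasDerivWithinAt_lam (continuousOn_Ici_of_hasDerivWithinAt hb') ht
  have hv := hsol.hasDerivWithinAt_fst t ht
  have hw := hsol.hasDerivWithinAt_snd t ht
  refine ((hlam.fun_pow 2).fun_mul ((hv.norm_sq.fun_add hw.norm_sq).fun_add
    (((hb' t ht).div_const Λ).fun_mul ((hv.inner ℝ hw).const_mul 2)))).congr_deriv ?_
  simp only [inner_sub_right, inner_neg_right, real_inner_smul_right, real_inner_smul_left,
    real_inner_self_eq_norm_sq, real_inner_comm (v t) (w t)]
  field_simp
  ring

lemma modifiedEnergy_le_mul_exp (hsol : IsDissipativeSolution b Λ v w)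
    (hb' : ∀ t ≥ 0, HasDerivWithinAt b (b' t) (Ici 0) t)
    (hb2 : ∀ t ≥ 0, |b' t| ≤ C₂ / (1 + t) ^ 2) (hΛ : 0 < Λ) (hq : q < 1) (hs : 0 ≤ s)
    (hbq : ∀ t ≥ s, |b t| ≤ q * Λ) (hst : s ≤ t) :
    modifiedEnergy b Λ v w t ≤
      modifiedEnergy b Λ v w s * Real.exp (C₂ / (1 - q) / (Λ * (1 + s))) := by
  have hC₂ : 0 ≤ C₂ := by simpa using (abs_nonneg _).trans (hb2 0 le_rfl)
  have hrate : ∀ x ≥ s, HasDerivWithinAt (fun x => -(C₂ / (1 - q) / Λ * (1 + x)⁻¹))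
      (C₂ / (1 + x) ^ 2 / (1 - q) / Λ) (Ici s) x := by
    intro x hx
    refine ((((hasDerivWithinAt_id x _).const_add 1).fun_inv
      (by simp only [id_eq]; linarith)).const_mul (C₂ / (1 - q) / Λ)).fun_neg.congr_deriv ?_
    simp only [id_eq]
    ring
  have hderiv : ∀ x ≥ s, HasDerivWithinAt (modifiedEnergy b Λ v w)
      (lam b x ^ 2 * (b' x / Λ * (2 * inner ℝ (v x) (w x)))) (Ici s) x := fun x hx =>
    (hsol.hasDerivWithinAt_modifiedEnergy hb' hΛ.ne' (hs.trans hx)).mono (Ici_subset_Ici.2 hs)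
  have hnonneg : ∀ x ≥ s, 0 ≤ modifiedEnergy b Λ v w x := fun x hx =>
    modifiedEnergy_nonneg hΛ hq.le (hbq x hx)
  have hgronwall := le_mul_exp_sub_of_deriv_le_mul hderiv hrate (fun x hx => ?_) hst
  · refine hgronwall.trans (mul_le_mul_of_nonneg_left (Real.exp_le_exp.2 ?_) (hnonneg s le_rfl))
    have hend : 0 ≤ C₂ / (1 - q) / Λ * (1 + t)⁻¹ :=
      mul_nonneg (by positivity) (inv_nonneg.2 (by linarith))
    rw [← div_div, div_eq_mul_inv _ (1 + s)]
    linarith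
  · refine (lam_sq_mul_inner_le_modifiedEnergy hΛ hq (hbq x hx) (b' x)).trans ?_
    have := hnonneg x hx
    have := hb2 x (hs.trans hx)
    gcongr

lemma lam_mul_phaseNorm_sq_le_of_hyperbolicZone (hsol : IsDissipativeSolution b Λ v w)
    (hb' : ∀ t ≥ 0, HasDerivWithinAt b (b' t) (Ici 0) t)
    (hb2 : ∀ t ≥ 0, |b' t| ≤ C₂ / (1 + t) ^ 2) (hΛ : 0 < Λ) (hN : 0 < N) (hq : q < 1)
    (hs : 0 ≤ s) (hbq : ∀ t ≥ s, |b t| ≤ q * Λ) (hzone : N ≤ Λ * (1 + s)) (hst : s ≤ t) :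
    (lam b t * phaseNorm v w t) ^ 2 ≤
      (1 + q) / (1 - q) * Real.exp (C₂ / (1 - q) / N) * (lam b s * phaseNorm v w s) ^ 2 := by
  have hgap : 0 < 1 - q := sub_pos.2 hq
  have hC₂ : 0 ≤ C₂ := by simpa using (abs_nonneg _).trans (hb2 0 le_rfl)
  have hlower := one_sub_mul_le_modifiedEnergy (v := v) (w := w) hΛ (hbq t hst)
  have hupper := modifiedEnergy_le_one_add_mul (v := v) (w := w) hΛ (hbq s le_rfl)
  have hnonneg : 0 ≤ modifiedEnergy b Λ v w s :=
    modifiedEnergy_nonneg hΛ hq.le (hbq s le_rfl)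
  have hmain : (1 - q) * (lam b t * phaseNorm v w t) ^ 2 ≤
      (1 + q) * (lam b s * phaseNorm v w s) ^ 2 * Real.exp (C₂ / (1 - q) / N) :=
    calc (1 - q) * (lam b t * phaseNorm v w t) ^ 2 ≤ modifiedEnergy b Λ v w t := hlower
      _ ≤ modifiedEnergy b Λ v w s * Real.exp (C₂ / (1 - q) / (Λ * (1 + s))) :=
        hsol.modifiedEnergy_le_mul_exp hb' hb2 hΛ hq hs hbq hst
      _ ≤ modifiedEnergy b Λ v w s * Real.exp (C₂ / (1 - q) / N) := by gcongr
      _ ≤ _ := mul_le_mul_of_nonneg_right hupper (Real.exp_pos _).le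
  rw [div_mul_eq_mul_div, div_mul_eq_mul_div, le_div_iff₀ hgap]
  linarith

end HyperbolicZone

end IsDissipativeSolution

lemma exists_lam_mul_phaseNorm_le_of_hyperbolicZone {b b' : ℝ → ℝ} {C₁ C₂ N : ℝ}
    (hb' : ∀ t ≥ 0, HasDerivWithinAt b (b' t) (Ici 0) t) (hb0 : ∀ t ≥ 0, 0 ≤ b t)
    (hb1 : ∀ t ≥ 0, b t ≤ C₁ / (1 + t)) (hb2 : ∀ t ≥ 0, |b' t| ≤ C₂ / (1 + t) ^ 2)
    (hN : C₁ < N) (F : Type*) [NormedAddCommGroup F] [InnerProductSpace ℝ F] :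
    ∃ H ≥ 0, ∀ Λ > 0, ∀ v w : ℝ → F, IsDissipativeSolution b Λ v w →
      ∀ s t, 0 ≤ s → s ≤ t → N ≤ Λ * (1 + s) →
        lam b t * phaseNorm v w t ≤ H * (lam b s * phaseNorm v w s) := by
  have hC₁ : 0 ≤ C₁ := by simpa using (hb0 0 le_rfl).trans (hb1 0 le_rfl)
  have hN0 : 0 < N := hC₁.trans_lt hN
  have hq : C₁ / N < 1 := (div_lt_one hN0).2 hN
  refine ⟨√((1 + C₁ / N) / (1 - C₁ / N) * Real.exp (C₂ / (1 - C₁ / N) / N)), Real.sqrt_nonneg _,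
    fun Λ hΛ v w hsol s t hs hst hzone => ?_⟩
  have hbq : ∀ x ≥ s, |b x| ≤ C₁ / N * Λ := by
    intro x hx
    have hx0 : 0 ≤ x := hs.trans hx
    have hzone' : N ≤ Λ * (1 + x) := hzone.trans (by gcongr)
    rw [abs_of_nonneg (hb0 x hx0)]
    calc b x ≤ C₁ / (1 + x) := hb1 x hx0
      _ = C₁ * Λ / (Λ * (1 + x)) := by field_simp
      _ ≤ C₁ * Λ / N := by gcongr
      _ = C₁ / N * Λ := by ring
  have hsq := hsol.lam_mul_phaseNorm_sq_le_of_hyperbolicZone hb' hb2 hΛ hN0 hq hs hbq hzone hst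
  have hs0 : 0 ≤ lam b s * phaseNorm v w s := mul_nonneg (lam_pos b s).le (phaseNorm_nonneg v w s)
  rw [← Real.sqrt_sq hs0, ← Real.sqrt_mul' _ (sq_nonneg _)]
  exact Real.le_sqrt_of_sq_le hsq

lemma exists_lam_mul_phaseNorm_le_of_forall_dissipativeZone_le {b b' : ℝ → ℝ} {C₁ C₂ N : ℝ}
    (hb' : ∀ t ≥ 0, HasDerivWithinAt b (b' t) (Ici 0) t) (hb0 : ∀ t ≥ 0, 0 ≤ b t)
    (hb1 : ∀ t ≥ 0, b t ≤ C₁ / (1 + t)) (hb2 : ∀ t ≥ 0, |b' t| ≤ C₂ / (1 + t) ^ 2)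
    (hN : C₁ < N) (F : Type*) [NormedAddCommGroup F] [InnerProductSpace ℝ F] :
    ∃ H > 0, ∀ Λ, 0 < Λ → Λ ≤ N → ∀ v w : ℝ → F, IsDissipativeSolution b Λ v w → ∀ B : ℝ,
      (∀ t ≥ 0, Λ * (1 + t) ≤ N → lam b t * phaseNorm v w t ≤ B) →
      ∀ t ≥ 0, lam b t * phaseNorm v w t ≤ H * B := by
  obtain ⟨H, hH0, hH⟩ := exists_lam_mul_phaseNorm_le_of_hyperbolicZone hb' hb0 hb1 hb2 hN F
  refine ⟨H + 1, by positivity, fun Λ hΛ hΛN v w hsol B hB t ht => ?_⟩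
  have hB0 : 0 ≤ B :=
    (mul_nonneg (lam_pos b 0).le (phaseNorm_nonneg v w 0)).trans (hB 0 le_rfl (by simpa using hΛN))
  rcases le_total (Λ * (1 + t)) N with hdiss | hhyp
  · exact (hB t ht hdiss).trans (le_mul_of_one_le_left hB0 (by linarith))
  · set s := N / Λ - 1 with hs
    have hboundary : Λ * (1 + s) = N := by
      rw [hs]
      field_simp
      ring
    have hs0 : 0 ≤ s := sub_nonneg.2 ((one_le_div hΛ).2 hΛN)
    have hst : s ≤ t := by nlinarith
    calc lam b t * phaseNorm v w t ≤ H * (lam b s * phaseNorm v w s) :=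
          hH Λ hΛ v w hsol s t hs0 hst hboundary.ge
      _ ≤ H * B := by
          gcongr
          exact hB s hs0 hboundary.le
      _ ≤ (H + 1) * B := by linarith

lemma isDissipativeSolution_col {b : ℝ → ℝ} {Λ : ℝ} {E : ℝ → Matrix (Fin 2) (Fin 2) ℂ}
    (hE : ∀ t ≥ 0, ∀ i j, HasDerivWithinAt (fun τ => E τ i j) ((sysMat Λ b t * E t) i j) (Ici 0) t)
    (j : Fin 2) : IsDissipativeSolution b Λ (fun t => E t 0 j) (fun t => E t 1 j) where
  hasDerivWithinAt_fst t ht := by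
    simpa [sysMat, Matrix.mul_apply, Fin.sum_univ_two] using hE t ht 0 j
  hasDerivWithinAt_snd t ht := by
    simpa [sysMat, Matrix.mul_apply, Fin.sum_univ_two, sub_eq_add_neg] using hE t ht 1 j

theorem combined_estimate_C1_general
    (b b' : ℝ → ℝ) (C₁ C₂ : ℝ)
    (hb' : ∀ t ≥ 0, HasDerivWithinAt b (b' t) (Ici 0) t)
    (hb0 : ∀ t ≥ 0, 0 ≤ b t)
    (hb1 : ∀ t ≥ 0, b t ≤ C₁ / (1 + t))
    (hb2 : ∀ t ≥ 0, |b' t| ≤ C₂ / (1 + t) ^ 2)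
    (hlimsup : ∃ μ < (1 : ℝ), ∀ᶠ t in atTop, t * b t ≤ μ)
    (N γ K : ℝ) (hN : C₁ < N)
    (hzone : ∀ Λ > 0, ∀ t ≥ 0, Λ * (1 + t) ≤ N → Λ ^ γ * lam b t ≤ K) :
    ∃ C > 0, ∀ Λ, 0 < Λ → Λ ≤ N →
      ∀ E : ℝ → Matrix (Fin 2) (Fin 2) ℂ,
        E 0 = 1 →
        (∀ t ≥ 0, ∀ i j,
          HasDerivWithinAt (fun τ => E τ i j) ((sysMat Λ b t * E t) i j) (Ici 0) t) →
        ∀ t ≥ 0,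
          ‖E t 0 0‖ ≤ C * Λ ^ (-γ) / lam b t ∧
          ‖E t 1 0‖ ≤ C * Λ ^ (-γ) / lam b t ∧
          ‖E t 0 1‖ ≤ C / lam b t ∧
          ‖E t 1 1‖ ≤ C / lam b t := by
  have hbc : ContinuousOn b (Ici 0) := continuousOn_Ici_of_hasDerivWithinAt hb'
  obtain ⟨D, hD0, hD⟩ := exists_integral_inv_lam_le hbc hb0 hlimsup
  obtain ⟨H, hH0, hH⟩ :=
    exists_lam_mul_phaseNorm_le_of_forall_dissipativeZone_le hb' hb0 hb1 hb2 hN ℂ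
  have hC₁ : 0 ≤ C₁ := by simpa using (hb0 0 le_rfl).trans (hb1 0 le_rfl)
  have hN0 : 0 < N := hC₁.trans_lt hN
  set M := (D * N + 1) * Real.exp (D * N ^ 2 / 2)
  have hM0 : 0 < M := by positivity
  refine ⟨H * max K M, mul_pos hH0 (lt_max_of_lt_right hM0), fun Λ hΛ hΛN E hE0 hE t ht => ?_⟩
  have hsol := isDissipativeSolution_col hE
  have hcol₁ : lam b t * phaseNorm (fun t => E t 0 0) (fun t => E t 1 0) t ≤
      H * max K M * Λ ^ (-γ) := by
    rw [mul_assoc]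
    refine hH Λ hΛ hΛN _ _ (hsol 0) _ (fun x hx hdiss => ?_) t ht
    refine ((hsol 0).lam_mul_phaseNorm_le_of_rpow_mul_lam_le hb0 hΛ hx
      (hzone Λ hΛ x hx hdiss)).trans ?_
    have hstart : phaseNorm (fun t => E t 0 0) (fun t => E t 1 0) 0 = 1 := by
      simp [phaseNorm, hE0]
    rw [hstart, mul_one]
    exact mul_le_mul_of_nonneg_right (le_max_left K M) (Real.rpow_nonneg hΛ.le _)
  have hcol₂ : lam b t * phaseNorm (fun t => E t 0 1) (fun t => E t 1 1) t ≤ H * max K M := by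
    refine hH Λ hΛ hΛN _ _ (hsol 1) _ (fun x hx hdiss => ?_) t ht
    refine ((hsol 1).lam_mul_phaseNorm_le_of_mem_dissipativeZone hbc hb0 hΛ.le hD0.le hD
      (by simp [hE0]) hx hdiss).trans ?_
    simp [hE0, M]
  exact ⟨norm_fst_le_div_lam hcol₁, norm_snd_le_div_lam hcol₁, norm_fst_le_div_lam hcol₂,
    norm_snd_le_div_lam hcol₂⟩

/-- Combined (dissipative and hyperbolic zone) estimate for
the fundamental solution in the case `limsup t·b(t) < 1/2`:
for `0 < Λ ≤ N` and all `t ≥ 0` the entries of `E(t,0)` are bounded by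
`C·Λ^{−γ}/λ(t)` (first column) and `C/λ(t)` (second column). -/
theorem combined_estimate_C1
    (b b' : ℝ → ℝ) (C₁ C₂ : ℝ)
    (hb' : ∀ t ≥ (0:ℝ), HasDerivAt b (b' t) t)
    (hb'c : ContinuousOn b' (Set.Ici 0))
    (hb0 : ∀ t ≥ (0:ℝ), 0 ≤ b t)
    (hb1 : ∀ t ≥ (0:ℝ), b t ≤ C₁ / (1 + t))
    (hb2 : ∀ t ≥ (0:ℝ), |b' t| ≤ C₂ / (1 + t) ^ 2)
    (hlimsup : ∃ μ < (1/2 : ℝ), ∀ᶠ t in atTop, t * b t ≤ μ)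
    (N γ K : ℝ) (hN : C₁ < N) (hγ : 0 ≤ γ) (hK : 0 < K)
    (hzone : ∀ Λ > (0:ℝ), ∀ t ≥ (0:ℝ), Λ * (1 + t) ≤ N → Λ ^ γ * (lam b t) ^ 2 ≤ K) :
    ∃ C > (0:ℝ), ∀ Λ, 0 < Λ → Λ ≤ N →
      ∀ E : ℝ → Matrix (Fin 2) (Fin 2) ℂ,
        E 0 = 1 →
        (∀ t ≥ (0:ℝ), ∀ i j : Fin 2,
          HasDerivAt (fun τ => E τ i j) ((sysMat Λ b t * E t) i j) t) →
        ∀ t ≥ (0:ℝ),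
          ‖E t 0 0‖ ≤ C * Λ ^ (-γ) / lam b t ∧
          ‖E t 1 0‖ ≤ C * Λ ^ (-γ) / lam b t ∧
          ‖E t 0 1‖ ≤ C / lam b t ∧
          ‖E t 1 1‖ ≤ C / lam b t := by
  have hbc : ContinuousOn b (Ici 0) := fun t ht => (hb' t ht).continuousAt.continuousWithinAt
  obtain ⟨C, hC, hbound⟩ := combined_estimate_C1_general b b' C₁ C₂
    (fun t ht => (hb' t ht).hasDerivWithinAt) hb0 hb1 hb2
    (hlimsup.imp fun μ hμ => ⟨hμ.1.trans one_half_lt_one, hμ.2⟩) N γ K hN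
    (fun Λ hΛ t ht hdiss => (mul_le_mul_of_nonneg_left (lam_le_lam_sq hbc hb0 ht)
      (Real.rpow_nonneg hΛ.le γ)).trans (hzone Λ hΛ t ht hdiss))
  exact ⟨C, hC, fun Λ hΛ hΛN E hE0 hE =>
    hbound Λ hΛ hΛN E hE0 fun t ht i j => (hE t ht i j).hasDerivWithinAt⟩
end
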